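/- arXiv:2605.00308 — 4 statements merged into one kernel-verified Lean document; each statement's English description precedes it below -/
import Mathlib

section
/- Under (A1) with ε_rel ∈ [0,1) and (A2) with ε_opt ≥ 0, the trained output ũ ∈ N satisfies J(ũ) ≤ (1/(1 − ε_rel))·((1 + ε_rel)·inf_{w ∈ N} J(w) + ε_opt). -/
/-!
Write `vs` for the minimiser of `Jt` over `closure N`. For every `w ∈ N`,
`(1 - εrel) * J ut ≤ Jt ut ≤ Jt vs + εopt ≤ Jt w + εopt ≤ (1 + εrel) * J w + εopt`:
the outer steps are the relative perturbation bound at `ut` and at `w`, the middle ones the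
optimisation error and the minimality of `vs`. Solving for `J w` gives a lower bound uniform in
`w`, hence a lower bound for the infimum of `J` over the nonempty set `N`; clearing the
positive factors `1 + εrel` and `1 - εrel` gives the claim.
-/

/-- Nonlinear Strang-type bound on the loss value: under the relative perturbation
assumption (A1) with `ε_rel ∈ [0,1)` and the optimisation assumption (A2) with
`ε_opt ≥ 0`, the trained output `ut ∈ N` satisfies
`J ut ≤ (1/(1-ε_rel)) * ((1+ε_rel) * inf_{w ∈ N} J w + ε_opt)`. -/
theorem loss_bound_of_rel_perturbation_and_opt_error
    {X : Type*} [NormedAddCommGroup X] [NormedSpace ℝ X]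
    (N : Set X) (hN : N.Nonempty)
    (J Jt : X → ℝ)
    (hJnn : ∀ v ∈ closure N, 0 ≤ J v)
    (hJtnn : ∀ v ∈ closure N, 0 ≤ Jt v)
    (εrel εopt : ℝ) (hεrel₀ : 0 ≤ εrel) (hεrel₁ : εrel < 1) (hεopt : 0 ≤ εopt)
    (hA1 : ∀ v ∈ closure N, |J v - Jt v| ≤ εrel * J v)
    (ut : X) (hut : ut ∈ N)
    (hA2 : ∃ vs ∈ closure N, (∀ w ∈ closure N, Jt vs ≤ Jt w) ∧ |Jt ut - Jt vs| ≤ εopt) :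
    J ut ≤ (1 / (1 - εrel)) * ((1 + εrel) * sInf (J '' N) + εopt) := by
  obtain ⟨vs, -, hmin, hopt⟩ := hA2
  have hlow : ((1 - εrel) * J ut - εopt) / (1 + εrel) ≤ sInf (J '' N) := by
    refine le_csInf (hN.image J) ?_
    rintro _ ⟨w, hw, rfl⟩
    rw [div_le_iff₀ (by linarith)]
    have h1 := (abs_le.mp (hA1 ut (subset_closure hut))).2
    have h2 := (abs_le.mp (hA1 w (subset_closure hw))).1
    have h3 := (abs_le.mp hopt).2
    have h4 := hmin w (subset_closure hw)
    linarith
  rw [div_le_iff₀ (by linarith)] at hlow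
  rw [one_div_mul_eq_div, le_div_iff₀ (by linarith)]
  linarith
end

section
/- Let X and Y be real normed spaces and T : X → Y a linear map that is bounded below with constant α > 0 and bounded above with constant C_T > 0. Let ℓ ∈ Y, u ∈ X with T u = ℓ, p ≥ 1 a real number, and J(v) = ‖T v − ℓ‖_Y^p. Under (A1) with ε_rel ∈ [0,1) and (A2) with ε_opt ≥ 0, the trained output ũ ∈ N satisfies ‖ũ − u‖_X ≤ (1/α)·[ (1/(1 − ε_rel))·((1 + ε_rel)·inf_{w ∈ A} J(w) + ε_opt) ]^{1/p}, and this quantity is in turn bounded by (1/α)·[ (1/(1 − ε_rel))·(C_T^p·(1 + ε_rel)·inf_{w ∈ A} ‖u − w‖_X^p + ε_opt) ]^{1/p}. -/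
/-!
Since `T u = ℓ`, the residual is `T v - ℓ = T (v - u)`, so `J v = ‖T v - ℓ‖ ^ p` lies between
`(α * ‖v - u‖) ^ p` and `(C_T * ‖u - v‖) ^ p`. For every `w` in the closure of `N`, the perturbation
bound and the approximate minimality of `ut` give
`(1 - εrel) * J ut ≤ Jt ut ≤ Jt w + εopt ≤ (1 + εrel) * J w + εopt`.
Taking the infimum over `w` bounds `J ut`, and the `p`-th root of the lower bound on `J ut` is the
first inequality. The second follows from `inf J ≤ C_T ^ p * inf ‖u - w‖ ^ p` and monotonicity of
the `p`-th root.
-/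

/-- Nonlinear Strang lemma: for a linear map `T` bounded below by `α` and above by `C_T`,
with residual loss `J v = ‖T v - ℓ‖ ^ p` (`p ≥ 1`, real power), under (A1) and (A2)
the trained output `ut ∈ N` satisfies
`‖ut - u‖ ≤ (1/α) * ((1/(1-ε_rel)) * ((1+ε_rel) * inf_{w ∈ cl N} J w + ε_opt)) ^ (1/p)`,
and this is in turn bounded by
`(1/α) * ((1/(1-ε_rel)) * (C_T^p * (1+ε_rel) * inf_{w ∈ cl N} ‖u - w‖^p + ε_opt)) ^ (1/p)`. -/
theorem nonlinear_strang_lemma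
    {X Y : Type*} [NormedAddCommGroup X] [NormedSpace ℝ X]
    [NormedAddCommGroup Y] [NormedSpace ℝ Y]
    (T : X →ₗ[ℝ] Y) (α C_T : ℝ) (hα : 0 < α) (hC : 0 < C_T)
    (hbelow : ∀ v : X, α * ‖v‖ ≤ ‖T v‖)
    (habove : ∀ v : X, ‖T v‖ ≤ C_T * ‖v‖)
    (ℓ : Y) (u : X) (hu : T u = ℓ) (p : ℝ) (hp : 1 ≤ p)
    (N : Set X) (hN : N.Nonempty)
    (Jt : X → ℝ) (hJtnn : ∀ v ∈ closure N, 0 ≤ Jt v)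
    (εrel εopt : ℝ) (hεrel₀ : 0 ≤ εrel) (hεrel₁ : εrel < 1) (hεopt : 0 ≤ εopt)
    (hA1 : ∀ v ∈ closure N, |‖T v - ℓ‖ ^ p - Jt v| ≤ εrel * ‖T v - ℓ‖ ^ p)
    (ut : X) (hut : ut ∈ N)
    (hA2 : ∃ vs ∈ closure N, (∀ w ∈ closure N, Jt vs ≤ Jt w) ∧ |Jt ut - Jt vs| ≤ εopt) :
    ‖ut - u‖ ≤ (1 / α) *
        ((1 / (1 - εrel)) *
          ((1 + εrel) * sInf ((fun w => ‖T w - ℓ‖ ^ p) '' closure N) + εopt)) ^ (1 / p) ∧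
    (1 / α) *
        ((1 / (1 - εrel)) *
          ((1 + εrel) * sInf ((fun w => ‖T w - ℓ‖ ^ p) '' closure N) + εopt)) ^ (1 / p) ≤
      (1 / α) *
        ((1 / (1 - εrel)) *
          (C_T ^ p * (1 + εrel) * sInf ((fun w => ‖u - w‖ ^ p) '' closure N) + εopt)) ^ (1 / p) := by
  have hp0 : 0 < p := by linarith
  have hres : ∀ v, T v - ℓ = T (v - u) := fun v => by rw [map_sub, hu]
  have hne : (closure N).Nonempty := hN.closure
  have hJnn : ∀ v, 0 ≤ ‖T v - ℓ‖ ^ p := fun v => by positivity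
  have hbdd : BddBelow ((fun w => ‖T w - ℓ‖ ^ p) '' closure N) :=
    ⟨0, by rintro _ ⟨w, -, rfl⟩; exact hJnn w⟩
  have hε : 0 < 1 - εrel := by linarith
  have hε' : 0 < 1 + εrel := by linarith
  have hCp : 0 < C_T ^ p := Real.rpow_pos_of_pos hC p
  set I := sInf ((fun w => ‖T w - ℓ‖ ^ p) '' closure N) with hI
  set K := sInf ((fun w => ‖u - w‖ ^ p) '' closure N) with hK
  have hI0 : 0 ≤ I := Real.sInf_nonneg (by rintro _ ⟨w, -, rfl⟩; exact hJnn w)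
  have hIK : I ≤ C_T ^ p * K := by
    rw [← div_le_iff₀' hCp]
    refine le_csInf (hne.image _) ?_
    rintro _ ⟨w, hw, rfl⟩
    rw [div_le_iff₀' hCp]
    calc I ≤ ‖T w - ℓ‖ ^ p := csInf_le hbdd ⟨w, hw, rfl⟩
      _ ≤ (C_T * ‖u - w‖) ^ p := by
        refine Real.rpow_le_rpow (norm_nonneg _) ?_ hp0.le
        rw [hres, norm_sub_rev u w]
        exact habove _
      _ = C_T ^ p * ‖u - w‖ ^ p := Real.mul_rpow hC.le (norm_nonneg _)
  have hJut : ‖T ut - ℓ‖ ^ p ≤ (1 / (1 - εrel)) * ((1 + εrel) * I + εopt) := by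
    obtain ⟨vs, -, hmin, hopt⟩ := hA2
    have h : ((1 - εrel) * ‖T ut - ℓ‖ ^ p - εopt) / (1 + εrel) ≤ I := by
      refine le_csInf (hne.image _) ?_
      rintro _ ⟨w, hw, rfl⟩
      rw [div_le_iff₀' hε']
      have h1 := (abs_le.1 (hA1 ut (subset_closure hut))).2
      have h2 := (abs_le.1 hopt).2
      have h3 := hmin w hw
      have h4 := (abs_le.1 (hA1 w hw)).1
      dsimp only
      linarith
    rw [div_le_iff₀' hε'] at h
    rw [one_div_mul_eq_div, le_div_iff₀' hε]
    linarith
  constructor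
  · rw [one_div_mul_eq_div α, le_div_iff₀' hα]
    calc α * ‖ut - u‖ ≤ ‖T ut - ℓ‖ := by rw [hres]; exact hbelow _
      _ = (‖T ut - ℓ‖ ^ p) ^ (1 / p) := by
        rw [one_div, Real.rpow_rpow_inv (norm_nonneg _) hp0.ne']
      _ ≤ _ := Real.rpow_le_rpow (hJnn ut) hJut (by positivity)
  · have h : (1 + εrel) * I ≤ C_T ^ p * (1 + εrel) * K := by
      calc (1 + εrel) * I ≤ (1 + εrel) * (C_T ^ p * K) := by gcongr
        _ = C_T ^ p * (1 + εrel) * K := by ring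
    gcongr
end

section
/- Let X and Ȳ be real normed spaces, T : X → Ȳ a continuous linear map, u ∈ X, ℓ = T u, p ≥ 1 a real number, and define the relaxed residual loss J(v) = ‖T v − ℓ‖_Ȳ^p. Under (A1) with ε_rel ∈ [0,1) and (A2) with ε_opt ≥ 0, the trained output ũ ∈ N satisfies ‖T ũ − T u‖_Ȳ^p ≤ (1/(1 − ε_rel))·((1 + ε_rel)·inf_{w ∈ N} ‖T u − T w‖_Ȳ^p + ε_opt). -/
/-!
Write `J v = ‖T v - T u‖ ^ p`. For every competitor `w ∈ N`, the relative perturbation bound at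
`ut` and at `w`, together with the near-minimality of `ut` for `Jt` on `closure N`, gives
`(1 - εrel) * J ut ≤ Jt ut ≤ Jt vs + εopt ≤ Jt w + εopt ≤ (1 + εrel) * J w + εopt`.
Solving for `J w` yields a lower bound independent of `w`, hence a lower bound for the infimum
over the nonempty set `N`; solving back for `J ut` gives the estimate.
-/

/-- Strang-type bound for PINN-like methods with a relaxed norm: for a continuous linear
map `T : X → Ybar`, `ℓ = T u`, relaxed loss `J v = ‖T v - ℓ‖ ^ p` (`p ≥ 1`, real powers),
under (A1) and (A2) the trained output `ut ∈ N` satisfies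
`‖T ut - T u‖ ^ p ≤ (1/(1-ε_rel)) * ((1+ε_rel) * inf_{w ∈ N} ‖T u - T w‖ ^ p + ε_opt)`. -/
theorem relaxed_strang_bound_pinn
    {X Ybar : Type*} [NormedAddCommGroup X] [NormedSpace ℝ X]
    [NormedAddCommGroup Ybar] [NormedSpace ℝ Ybar]
    (T : X →L[ℝ] Ybar) (u : X) (p : ℝ) (hp : 1 ≤ p)
    (N : Set X) (hN : N.Nonempty)
    (Jt : X → ℝ) (hJtnn : ∀ v ∈ closure N, 0 ≤ Jt v)
    (εrel εopt : ℝ) (hεrel₀ : 0 ≤ εrel) (hεrel₁ : εrel < 1) (hεopt : 0 ≤ εopt)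
    (hA1 : ∀ v ∈ closure N, |‖T v - T u‖ ^ p - Jt v| ≤ εrel * ‖T v - T u‖ ^ p)
    (ut : X) (hut : ut ∈ N)
    (hA2 : ∃ vs ∈ closure N, (∀ w ∈ closure N, Jt vs ≤ Jt w) ∧ |Jt ut - Jt vs| ≤ εopt) :
    ‖T ut - T u‖ ^ p ≤
      (1 / (1 - εrel)) *
        ((1 + εrel) * sInf ((fun w => ‖T u - T w‖ ^ p) '' N) + εopt) := by
  obtain ⟨vs, -, hmin, hopt⟩ := hA2
  have hpos : 0 < 1 - εrel := by linarith
  have hpos' : 0 < 1 + εrel := by linarith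
  have key : ∀ w ∈ N,
      (1 - εrel) * ‖T ut - T u‖ ^ p ≤ (1 + εrel) * ‖T u - T w‖ ^ p + εopt := by
    intro w hw
    have h₁ := (abs_le.mp (hA1 ut (subset_closure hut))).2
    have h₂ := (abs_le.mp (hA1 w (subset_closure hw))).1
    have h₃ := (abs_le.mp hopt).2
    have h₄ := hmin w (subset_closure hw)
    rw [norm_sub_rev (T u) (T w)]
    linarith
  have hinf : ((1 - εrel) * ‖T ut - T u‖ ^ p - εopt) / (1 + εrel) ≤
      sInf ((fun w => ‖T u - T w‖ ^ p) '' N) := by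
    refine le_csInf (hN.image _) ?_
    rintro _ ⟨w, hw, rfl⟩
    rw [div_le_iff₀' hpos']
    linarith [key w hw]
  rw [div_le_iff₀' hpos'] at hinf
  rw [one_div_mul_eq_div, le_div_iff₀' hpos]
  linarith
end

section
/- Let a < b be real numbers with h = b − a, let p ∈ ℕ, and let Q be a quadrature rule on [a,b] with finitely many nodes x_i ∈ [a,b] and nonnegative weights w_i ≥ 0 that is exact of degree p. If f : ℝ → ℝ is (p+1)-times continuously differentiable on [a,b] with |f^{(p+1)}(x)| ≤ M for all x ∈ [a,b], then |∫_a^b f(x) dx − Q(f)| ≤ (2/(p+1)!)·M·h^{p+2}. -/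
/-!
Taylor expansion at `a` with the Lagrange remainder gives a polynomial `q` of degree at most `p`
with `|f - q| ≤ K := M * (b - a) ^ (p + 1) / (p + 1)!` on `[a, b]`. Exactness on `q` turns the
quadrature error of `f` into that of `f - q`, which is at most `K * (b - a) + K * ∑ w i`. Since the
weights are nonnegative and exactness on the constant `1` gives `∑ w i = b - a`, the total is
`2 * K * (b - a)`.
-/

open Finset

/-- The Taylor polynomial of `f` of degree `p` at `a`, as an element of `ℝ[X]`, with derivatives
taken within `[a, b]`. -/
noncomputable def taylorPoly (f : ℝ → ℝ) (p : ℕ) (a b : ℝ) : Polynomial ℝ :=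
  ∑ k ∈ range (p + 1), Polynomial.C
    ((Nat.factorial k : ℝ)⁻¹ * iteratedDerivWithin k f (Set.Icc a b) a) *
      (Polynomial.X - Polynomial.C a) ^ k

lemma natDegree_taylorPoly_le (f : ℝ → ℝ) (p : ℕ) (a b : ℝ) :
    (taylorPoly f p a b).natDegree ≤ p := by
  refine Polynomial.natDegree_sum_le_of_forall_le _ _ fun k hk => ?_
  refine (Polynomial.natDegree_C_mul_le _ _).trans ?_
  rw [Polynomial.natDegree_pow, Polynomial.natDegree_X_sub_C, mul_one]
  exact Nat.lt_succ_iff.mp (mem_range.mp hk)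

lemma eval_taylorPoly (f : ℝ → ℝ) (p : ℕ) (a b t : ℝ) :
    (taylorPoly f p a b).eval t = taylorWithinEval f p (Set.Icc a b) a t := by
  rw [taylor_within_apply, taylorPoly, Polynomial.eval_finsetSum]
  refine sum_congr rfl fun k _ => ?_
  simp only [Polynomial.eval_mul, Polynomial.eval_C, Polynomial.eval_pow, Polynomial.eval_sub,
    Polynomial.eval_X, smul_eq_mul]
  ring

/-- The Lagrange remainder yields the factor `1 / (p + 1)!`, which is sharper than the `1 / p!` of
`taylor_mean_remainder_bound`. -/
lemma abs_sub_taylorPoly_le {a b M : ℝ} {p : ℕ} {f : ℝ → ℝ}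
    (hf : ContDiffOn ℝ (p + 1) f (Set.Icc a b))
    (hM : ∀ t ∈ Set.Icc a b, |iteratedDerivWithin (p + 1) f (Set.Icc a b) t| ≤ M)
    {t : ℝ} (ht : t ∈ Set.Icc a b) :
    |f t - (taylorPoly f p a b).eval t| ≤
      M * (b - a) ^ (p + 1) / (Nat.factorial (p + 1) : ℝ) := by
  have hM0 : 0 ≤ M := (abs_nonneg _).trans (hM t ht)
  have hba : 0 ≤ b - a := sub_nonneg.2 (ht.1.trans ht.2)
  rw [eval_taylorPoly]
  rcases eq_or_lt_of_le ht.1 with rfl | hat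
  · rw [taylorWithinEval_self, sub_self, abs_zero]
    positivity
  have hsub : Set.Icc a t ⊆ Set.Icc a b := Set.Icc_subset_Icc_right ht.2
  have hab : a < b := hat.trans_le ht.2
  obtain ⟨y, hy, h⟩ := taylor_mean_remainder_lagrange_iteratedDeriv hat.ne
    (by rw [Set.uIcc_of_le hat.le]; exact hf.mono hsub)
  rw [Set.uIcc_of_le hat.le] at h
  rw [Set.uIoo_of_le hat.le] at hy
  -- `[a, t]` and `[a, b]` agree near `a`, so the Taylor polynomial does not depend on `t`.
  have hset : (Set.Icc a t : Set ℝ) =ᶠ[nhds a] Set.Icc a b := by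
    filter_upwards [Iio_mem_nhds hat] with z hz
    have hz' : z < t := hz
    refine propext ⟨fun h => hsub h, fun h => ⟨h.1, hz'.le⟩⟩
  have htay : taylorWithinEval f p (Set.Icc a t) a t
      = taylorWithinEval f p (Set.Icc a b) a t := by
    simp only [taylor_within_apply]
    refine sum_congr rfl fun k _ => ?_
    rw [iteratedDerivWithin_eq_iteratedFDerivWithin, iteratedDerivWithin_eq_iteratedFDerivWithin,
      iteratedFDerivWithin_congr_set hset]
  have hyb : y ∈ Set.Ioo a b := ⟨hy.1, hy.2.trans_le ht.2⟩
  have hder : iteratedDeriv (p + 1) f y = iteratedDerivWithin (p + 1) f (Set.Icc a b) y := by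
    rw [iteratedDeriv_eq_iteratedFDeriv, iteratedDerivWithin_eq_iteratedFDerivWithin,
      iteratedFDerivWithin_eq_iteratedFDeriv (uniqueDiffOn_Icc hab) _ (Set.Ioo_subset_Icc_self hyb)]
    exact hf.contDiffAt (Icc_mem_nhds hyb.1 hyb.2)
  rw [← htay, h, hder, abs_div, abs_mul, abs_pow, abs_of_pos (sub_pos.2 hat), Nat.abs_cast]
  have := hM y (Set.Ioo_subset_Icc_self hyb)
  have h1 : (t - a) ^ (p + 1) ≤ (b - a) ^ (p + 1) :=
    pow_le_pow_left₀ (sub_nonneg.2 hat.le) (by linarith [ht.2]) _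
  gcongr

/-- Quadrature error estimate: for a rule on `[a,b]` (nodes in `[a,b]`, nonnegative
weights) exact of degree `p`, and `f` which is `(p+1)`-times continuously differentiable
on `[a,b]` with `|f^{(p+1)}| ≤ M` there,
`|∫_a^b f - Q f| ≤ (2/(p+1)!) * M * h^(p+2)` where `h = b - a`. -/
theorem quadrature_error_le_of_contDiffOn
    {ι : Type*} [Fintype ι] (a b : ℝ) (hab : a < b) (p : ℕ)
    (x : ι → ℝ) (w : ι → ℝ)
    (hx : ∀ i, x i ∈ Set.Icc a b) (hw : ∀ i, 0 ≤ w i)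
    (hexact : ∀ q : Polynomial ℝ, q.natDegree ≤ p →
      ∑ i, w i * q.eval (x i) = ∫ t in a..b, q.eval t)
    (f : ℝ → ℝ) (M : ℝ)
    (hf : ContDiffOn ℝ (p + 1) f (Set.Icc a b))
    (hM : ∀ t ∈ Set.Icc a b, |iteratedDerivWithin (p + 1) f (Set.Icc a b) t| ≤ M) :
    |(∫ t in a..b, f t) - ∑ i, w i * f (x i)| ≤
      (2 / (Nat.factorial (p + 1) : ℝ)) * M * (b - a) ^ (p + 2) := by
  set q := taylorPoly f p a b
  set K : ℝ := M * (b - a) ^ (p + 1) / (Nat.factorial (p + 1) : ℝ) with hK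
  have hbound : ∀ t ∈ Set.Icc a b, |f t - q.eval t| ≤ K :=
    fun t ht => abs_sub_taylorPoly_le hf hM ht
  have hwsum : ∑ i, w i = b - a := by
    simpa using hexact 1 (by simp)
  have hfint : IntervalIntegrable f MeasureTheory.volume a b :=
    ContinuousOn.intervalIntegrable_of_Icc hab.le hf.continuousOn
  have hqint : IntervalIntegrable (fun t => q.eval t) MeasureTheory.volume a b :=
    q.continuous.intervalIntegrable a b
  have hsplit : (∫ t in a..b, f t) - ∑ i, w i * f (x i)
      = (∫ t in a..b, (f t - q.eval t)) - ∑ i, w i * (f (x i) - q.eval (x i)) := by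
    rw [intervalIntegral.integral_sub hfint hqint, ← hexact q (natDegree_taylorPoly_le f p a b)]
    simp only [mul_sub, sum_sub_distrib]
    ring
  have hI : |∫ t in a..b, (f t - q.eval t)| ≤ K * (b - a) := by
    have := intervalIntegral.norm_integral_le_of_norm_le_const (a := a) (b := b) (C := K)
      (f := fun t => f t - q.eval t) fun t ht =>
        hbound t (Set.Ioc_subset_Icc_self (Set.uIoc_of_le hab.le ▸ ht))
    rwa [abs_of_pos (sub_pos.2 hab)] at this
  have hS : |∑ i, w i * (f (x i) - q.eval (x i))| ≤ K * (b - a) := by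
    calc _ ≤ ∑ i, |w i * (f (x i) - q.eval (x i))| := abs_sum_le_sum_abs _ _
      _ ≤ ∑ i, w i * K := sum_le_sum fun i _ => by
          rw [abs_mul, abs_of_nonneg (hw i)]
          exact mul_le_mul_of_nonneg_left (hbound _ (hx i)) (hw i)
      _ = K * (b - a) := by rw [← sum_mul, hwsum, mul_comm]
  rw [hsplit]
  calc _ ≤ K * (b - a) + K * (b - a) := (abs_sub _ _).trans (add_le_add hI hS)
    _ = _ := by rw [hK]; ring
end
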